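/- For every m ≥ 3, the number of ST-admissible words of length m whose leftmost symbol equals 0 is exactly (N4(m−1) + N4(m−2))/2. -/

import Mathlib

namespace STLOCO

/-- Forbidden 2-tuples of `ST⁴`, read left-to-right. -/
def STpair (a b : Fin 4) : Prop :=
  (a = 0 ∧ b = 1) ∨ (a = 1 ∧ b = 0) ∨ (a = 1 ∧ b = 2) ∨
  (a = 2 ∧ b = 1) ∨ (a = 2 ∧ b = 3) ∨ (a = 3 ∧ b = 2)

/-- Forbidden 3-tuples of `ST⁴`, read left-to-right. -/
def STtriple (a x b : Fin 4) : Prop :=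
  (a = 0 ∧ x = 3 ∧ b = 0) ∨ (a = 3 ∧ x = 0 ∧ b = 3)

instance (a b : Fin 4) : Decidable (STpair a b) := by unfold STpair; infer_instance
instance (a x b : Fin 4) : Decidable (STtriple a x b) := by unfold STtriple; infer_instance

/-- A word `w : Fin m → Fin 4` (index `0` is the leftmost symbol) is ST-admissible. -/
def STadm {m : ℕ} (w : Fin m → Fin 4) : Prop :=
  (∀ i j : Fin m, (j : ℕ) = (i : ℕ) + 1 → ¬ STpair (w i) (w j)) ∧
  (∀ i j k : Fin m, (j : ℕ) = (i : ℕ) + 1 → (k : ℕ) = (i : ℕ) + 2 →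
    ¬ STtriple (w i) (w j) (w k))

instance {m : ℕ} : DecidablePred (@STadm m) := fun w => by
  unfold STadm; infer_instance

/-- Number of ST-admissible words of length `m`, with the convention `N4 0 = 2`. -/
def N4 (m : ℕ) : ℕ :=
  if m = 0 then 2
  else (Finset.univ.filter (fun w : Fin m → Fin 4 => STadm w)).card

/-!
The complement `a ↦ 3 - a` of the symbols preserves `ST⁴` and exchanges the levels `{0, 2}` and
`{1, 3}`, so exactly half of the admissible words start in `{0, 2}`, and half in `{1, 3}`.
After a leading `0` comes `0`, `2` or `3`. Putting `0` in front of a word starting in `{0, 2}` never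
creates a forbidden tuple, which gives half of `N4 (m - 1)`. A word `0 3 v` is admissible exactly
when `v` is admissible and starts in `{1, 3}`, which gives half of `N4 (m - 2)`.
-/

section

open Finset

theorem stpair_rev (a b : Fin 4) : STpair a.rev b.rev ↔ STpair a b := by
  decide +revert

theorem sttriple_rev (a x b : Fin 4) : STtriple a.rev x.rev b.rev ↔ STtriple a x b := by
  decide +revert

theorem stadm_rev_comp {m : ℕ} (w : Fin m → Fin 4) : STadm (Fin.rev ∘ w) ↔ STadm w := by
  simp only [STadm, Function.comp_apply, stpair_rev, sttriple_rev]

theorem forall_adjacent_cons {α : Type*} {n : ℕ} (r : α → α → Prop) (a : α)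
    (w : Fin (n + 1) → α) :
    (∀ i j : Fin (n + 2), (j : ℕ) = (i : ℕ) + 1 →
        r ((Fin.cons a w : Fin (n + 2) → α) i) ((Fin.cons a w : Fin (n + 2) → α) j)) ↔
      r a (w 0) ∧ ∀ i j : Fin (n + 1), (j : ℕ) = (i : ℕ) + 1 → r (w i) (w j) := by
  simp [Fin.forall_fin_succ (n := n + 1)]

/-- The second letter of `w` is written as `w k` with `(k : ℕ) = 1`, which is vacuous for a
one-letter word; the numeral `1 : Fin 1` would wrap around to `0`. -/
theorem forall_consecutive_triple_cons {α : Type*} {n : ℕ} (t : α → α → α → Prop) (a : α)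
    (w : Fin (n + 1) → α) :
    (∀ i j k : Fin (n + 2), (j : ℕ) = (i : ℕ) + 1 → (k : ℕ) = (i : ℕ) + 2 →
        t ((Fin.cons a w : Fin (n + 2) → α) i) ((Fin.cons a w : Fin (n + 2) → α) j)
          ((Fin.cons a w : Fin (n + 2) → α) k)) ↔
      (∀ k : Fin (n + 1), (k : ℕ) = 1 → t a (w 0) (w k)) ∧
        ∀ i j k : Fin (n + 1), (j : ℕ) = (i : ℕ) + 1 → (k : ℕ) = (i : ℕ) + 2 →
          t (w i) (w j) (w k) := by
  simp [Fin.forall_fin_succ (n := n + 1), Fin.forall_fin_succ (n := n)]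

theorem stadm_cons {n : ℕ} (a : Fin 4) (w : Fin (n + 1) → Fin 4) :
    STadm (Fin.cons a w : Fin (n + 2) → Fin 4) ↔
      STadm w ∧ ¬ STpair a (w 0) ∧
        ∀ k : Fin (n + 1), (k : ℕ) = 1 → ¬ STtriple a (w 0) (w k) := by
  rw [STadm, forall_adjacent_cons (fun x y => ¬ STpair x y),
    forall_consecutive_triple_cons (fun x y z => ¬ STtriple x y z), STadm]
  tauto

theorem card_filter_apply_zero_eq {α : Type*} [Fintype α] [DecidableEq α] {n : ℕ} (a : α)
    (P : (Fin (n + 1) → α) → Prop) [DecidablePred P] :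
    #{w : Fin (n + 1) → α | P w ∧ w 0 = a} =
      #{u : Fin n → α | P (Fin.cons a u : Fin (n + 1) → α)} := by
  rw [← card_image_of_injective {u | P _} (Fin.cons_right_injective (α := fun _ => α) a)]
  refine congrArg card (Finset.ext fun w => ?_)
  cases w using Fin.consCases with
  | cons b u =>
    simp +contextual [Fin.cons_inj, eq_comm (a := a), and_congr_left_iff]

theorem stadm_cons_zero_iff_of_mem {n : ℕ} {u : Fin (n + 1) → Fin 4}
    (hu : u 0 ∈ ({0, 2} : Finset (Fin 4))) :
    STadm (Fin.cons 0 u : Fin (n + 2) → Fin 4) ↔ STadm u := by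
  have harmless : ∀ a ∈ ({0, 2} : Finset (Fin 4)), ¬ STpair 0 a ∧ ∀ b, ¬ STtriple 0 a b := by
    decide
  simp [stadm_cons, harmless _ hu]

theorem stadm_cons_zero_cons_three_iff {n : ℕ} (v : Fin (n + 1) → Fin 4) :
    STadm (Fin.cons 0 (Fin.cons 3 v : Fin (n + 2) → Fin 4) : Fin (n + 3) → Fin 4) ↔
      STadm v ∧ v 0 ∈ ({1, 3} : Finset (Fin 4)) := by
  have allowed : ∀ a, ¬ STpair 3 a ∧ ¬ STtriple 0 3 a ↔ a ∈ ({1, 3} : Finset (Fin 4)) := by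
    decide
  have harmless : ∀ a ∈ ({1, 3} : Finset (Fin 4)), ∀ b, ¬ STtriple 3 a b := by decide
  have third_symbol : (∀ k : Fin (n + 2), (k : ℕ) = 1 →
      ¬ STtriple 0 3 ((Fin.cons 3 v : Fin (n + 2) → Fin 4) k)) ↔ ¬ STtriple 0 3 (v 0) := by
    simp [Fin.forall_fin_succ (n := n + 1)]
  rw [stadm_cons, stadm_cons, Fin.cons_zero, third_symbol]
  constructor
  · rintro ⟨⟨hv, h3, -⟩, -, h03⟩
    exact ⟨hv, (allowed _).1 ⟨h3, h03⟩⟩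
  · rintro ⟨hv, hv0⟩
    obtain ⟨h3, h03⟩ := (allowed _).2 hv0
    exact ⟨⟨hv, h3, fun k _ => harmless _ hv0 _⟩, by decide, h03⟩

theorem two_mul_card_stadm_apply_zero_mem (n : ℕ) {s : Finset (Fin 4)}
    (hs : ∀ a, a.rev ∈ s ↔ a ∉ s) :
    2 * #{w : Fin (n + 1) → Fin 4 | STadm w ∧ w 0 ∈ s} = N4 (n + 1) := by
  have card_notMem : #{w : Fin (n + 1) → Fin 4 | STadm w ∧ w 0 ∉ s} =
      #{w : Fin (n + 1) → Fin 4 | STadm w ∧ w 0 ∈ s} := by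
    refine card_bijective (Fin.rev ∘ ·) Fin.rev_bijective.comp_left fun w => ?_
    simp [stadm_rev_comp, hs]
  have card_split := card_filter_add_card_filter_not
    (s := ({w | STadm w} : Finset (Fin (n + 1) → Fin 4))) (fun w => w 0 ∈ s)
  rw [filter_filter, filter_filter] at card_split
  rw [N4, if_neg n.succ_ne_zero, ← card_split, card_notMem, two_mul]

theorem card_stadm_apply_zero_eq_zero (n : ℕ) :
    #{w : Fin (n + 3) → Fin 4 | STadm w ∧ w 0 = 0} =
      #{u : Fin (n + 2) → Fin 4 | STadm u ∧ u 0 ∈ ({0, 2} : Finset (Fin 4))} +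
      #{v : Fin (n + 1) → Fin 4 | STadm v ∧ v 0 ∈ ({1, 3} : Finset (Fin 4))} := by
  have notMem_pair_iff (u : Fin (n + 2) → Fin 4)
      (hu : STadm (Fin.cons 0 u : Fin (n + 3) → Fin 4)) :
      u 0 ∉ ({0, 2} : Finset (Fin 4)) ↔ u 0 = 3 := by
    have : ∀ a, ¬ STpair 0 a → (a ∉ ({0, 2} : Finset (Fin 4)) ↔ a = 3) := by decide
    exact this _ ((stadm_cons 0 u).1 hu).2.1
  rw [card_filter_apply_zero_eq,
    ← card_filter_add_card_filter_not (fun u => u 0 ∈ ({0, 2} : Finset (Fin 4))),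
    filter_filter, filter_filter]
  congr 1
  · exact congrArg card (filter_congr fun u _ => and_congr_left stadm_cons_zero_iff_of_mem)
  · rw [filter_congr fun u _ => and_congr_right (notMem_pair_iff u), card_filter_apply_zero_eq]
    simp only [stadm_cons_zero_cons_three_iff]

end

theorem st_leftmost_zero_count (m : ℕ) (hm : 3 ≤ m) :
    (((Finset.univ.filter (fun w : Fin m → Fin 4 =>
        STadm w ∧ w ⟨0, by omega⟩ = (0 : Fin 4))).card : ℚ) =
      ((N4 (m - 1) : ℚ) + (N4 (m - 2) : ℚ)) / 2) := by
  obtain ⟨n, rfl⟩ : ∃ n, m = n + 3 := ⟨m - 3, by omega⟩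
  have even_half := two_mul_card_stadm_apply_zero_mem (n + 1) (s := {0, 2}) (by decide)
  have odd_half := two_mul_card_stadm_apply_zero_mem n (s := {1, 3}) (by decide)
  rw [show n + 3 - 1 = n + 1 + 1 from rfl, show n + 3 - 2 = n + 1 from rfl,
    ← even_half, ← odd_half, Fin.mk_zero, card_stadm_apply_zero_eq_zero]
  push_cast
  ring

end STLOCO
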